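/- arXiv:1503.05175 — 2 statements merged into one kernel-verified Lean document; each statement's English description precedes it below -/
import Mathlib

section
/- Let T be a c.e.m.p.t. on a σ-finite measure space (X,𝒜,μ) with μ(X)=∞. Assume Y∈𝒜 is a Darling–Kac set with return sequence a_n=a_T(n), where a_T∈R_α for some α∈(0,1]; let b_T be the inverse of a_T and γ_T(s):=1/b_T(1/s). Suppose E_k,E_k′⊆Y (k≥1) are measurable sets of positive measure with μ(E_k)→0 and μ(E_k △ E_k′)=o(μ(E_k)) as k→∞. Then for arbitrary F,F̃∈ℱ: μ_{E_k}(γ_T(μ(E_k))·φ_{E_k} ≤ t) ⇒ F̃(t) if and only if μ_{E_k′}(γ_T(μ(E_k′))·φ_{E_k′} ≤ t) ⇒ F̃(t); and μ_Y(γ_T(μ(E_k))·φ_{E_k} ≤ t) ⇒ F(t) if and only if μ_Y(γ_T(μ(E_k′))·φ_{E_k′} ≤ t) ⇒ F(t). -/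
/-!
Put `U = E ∪ E'` and compare both `E` and `E'` with `U`; so consider `E ⊆ U ⊆ Y` and `D = U \ E` with
`μ D = o(μ U)`. The times `φ_E` and `φ_U` differ only where the first visit to `U` takes place in `D`.

* Return times: the set of points of `U` whose first return to `U` lies in `D` has measure at most
  `μ D`, because the first-return map of `U` preserves `μ` (`measure_return_le`). Hence the two
  conditional laws differ by `O(μ D / μ U)`.
* Hitting times: the points of `Y` which visit `D` before time `n` have measure at most
  `2 μ(Y) a(n) μ(D)` by the Darling–Kac property (`dk_bound`). For `n ≈ t b(1 / μ U)` regular variation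
  gives `a(n) = O(1 / μ U)`, so this is again `O(μ D / μ U)`.

The normalizations are asymptotically equal, since `μ E ~ μ U` and `b` is regularly varying
(`ratio_eventually`). What remains is a Lévy-type sandwich: `AsympClose` is a symmetric and
transitive relation between sequences of functions which permits an arbitrarily small shift of the
argument, and it preserves vague limits when the functions agree at `0` (`vagueConv_of_close`).
-/

open MeasureTheory Filter Set Topology ENNReal

noncomputable section

/-- First entrance/return time of `E` under `T`, valued in `ℝ≥0∞` (`∞` if the
forward orbit never enters `E`). -/
def phiRT {X : Type*} (T : X → X) (E : Set X) (x : X) : ℝ≥0∞ :=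
  ⨅ n ∈ {n : ℕ | 0 < n ∧ T^[n] x ∈ E}, (n : ℝ≥0∞)

/-- Conditional (sub)probability `μ_E(A) = μ(E∩A)/μ(E)`, as a real number. -/
def condProb {X : Type*} [MeasurableSpace X] (μ : Measure X) (E A : Set X) : ℝ :=
  (μ (E ∩ A) / μ E).toReal

/-- Conservative ergodic measure preserving transformation. -/
def CEMPT {X : Type*} [MeasurableSpace X] (T : X → X) (μ : Measure X) : Prop :=
  Conservative T μ ∧ Ergodic T μ

/-- Membership in the class ℱ of sub-probability distribution functions on `[0,∞)`. -/
def MemF (F : ℝ → ℝ) : Prop :=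
  (∀ ⦃s t : ℝ⦄, 0 ≤ s → s ≤ t → F s ≤ F t) ∧
  (∀ t, 0 ≤ t → F t ∈ Set.Icc (0 : ℝ) 1) ∧
  (∀ t, 0 ≤ t → ContinuousWithinAt F (Set.Ici t) t)

/-- Vague convergence `Fₙ ⇒ F` of sub-distribution functions on `[0,∞)`:
convergence at every continuity point of `F` in `[0,∞)`. -/
def VagueConv (Fn : ℕ → ℝ → ℝ) (F : ℝ → ℝ) : Prop :=
  ∀ t, 0 ≤ t → ContinuousWithinAt F (Set.Ici 0) t →
    Tendsto (fun n => Fn n t) atTop (𝓝 (F t))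

/-- A scaling function: a homeomorphism of `[0,∞)`. -/
def IsScalingFunction (γ : ℝ → ℝ) : Prop :=
  γ 0 = 0 ∧ StrictMonoOn γ (Set.Ici 0) ∧ ContinuousOn γ (Set.Ici 0) ∧
  (∀ x, 0 ≤ x → 0 ≤ γ x) ∧ (∀ y, 0 ≤ y → ∃ x, 0 ≤ x ∧ γ x = y)

/-- Regular variation of index `α` at infinity. -/
def RegVary (a : ℝ → ℝ) (α : ℝ) : Prop :=
  ∀ c : ℝ, 0 < c → Tendsto (fun t => a (c * t) / a t) atTop (𝓝 (c ^ α))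

/-- The transfer operator iterate `T̂^k 1_Y` (unnormalized): the Radon–Nikodym
derivative w.r.t. `μ` of the pushforward under `T^k` of `μ` restricted to `Y`. -/
def dkDens {X : Type*} [MeasurableSpace X] (T : X → X) (μ : Measure X) (Y : Set X)
    (k : ℕ) : X → ℝ≥0∞ :=
  (Measure.map (T^[k]) (μ.restrict Y)).rnDeriv μ

/-- `Y` is a Darling–Kac set with return sequence `n ↦ a n`:
`(1/aₙ) Σ_{k<n} T̂^k (1_Y/μ(Y)) → 1` uniformly (mod μ) on `Y`. -/
def IsDKSet {X : Type*} [MeasurableSpace X] (T : X → X) (μ : Measure X) (Y : Set X)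
    (a : ℝ → ℝ) : Prop :=
  MeasurableSet Y ∧ 0 < μ Y ∧ μ Y < ∞ ∧
  ∀ ε : ℝ, 0 < ε → ∃ N : ℕ, ∀ n ≥ N,
    ∀ᵐ x ∂μ.restrict Y,
      |(∑ k ∈ Finset.range n, (dkDens T μ Y k x).toReal) / (μ Y).toReal / a n - 1| ≤ ε

/-- Normalized return/hitting distribution function: the distribution, under `μ_A`,
of `γ(μ(E))·φ_E` evaluated at `t`. -/
def nrmDF {X : Type*} [MeasurableSpace X] (μ : Measure X) (T : X → X) (γ : ℝ → ℝ)
    (A E : Set X) (t : ℝ) : ℝ :=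
  condProb μ A {x | ENNReal.ofReal (γ (μ E).toReal) * phiRT T E x ≤ ENNReal.ofReal t}

/-! ### Vague convergence and the sandwich relation -/

/-- Two sequences of distribution functions on `(0,∞)` are asymptotically close if each is eventually
dominated by the other one, up to an arbitrarily small shift of the argument and an arbitrarily small
error. -/
def AsympClose (G H : ℕ → ℝ → ℝ) : Prop :=
  ∀ t s : ℝ, 0 < t → t < s → ∀ ε : ℝ, 0 < ε →
    ∀ᶠ k in atTop, G k t ≤ H k s + ε ∧ H k t ≤ G k s + ε

lemma AsympClose.symm {G H : ℕ → ℝ → ℝ} (h : AsympClose G H) : AsympClose H G :=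
  fun t s ht hts ε hε => (h t s ht hts ε hε).mono fun _ hk => hk.symm

lemma AsympClose.trans {G H K : ℕ → ℝ → ℝ} (h : AsympClose G H) (h' : AsympClose H K) :
    AsympClose G K := by
  intro t s ht hts ε hε
  filter_upwards [h t ((t + s) / 2) ht (by linarith) (ε / 2) (by linarith),
    h' ((t + s) / 2) s (by linarith) (by linarith) (ε / 2) (by linarith),
    h' t ((t + s) / 2) ht (by linarith) (ε / 2) (by linarith),
    h ((t + s) / 2) s (by linarith) (by linarith) (ε / 2) (by linarith)] with k h1 h2 h3 h4
  exact ⟨by linarith [h1.1, h2.1], by linarith [h3.2, h4.2]⟩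

lemma exists_cont_point {F : ℝ → ℝ} (hF : MemF F) {x y : ℝ} (hx : 0 ≤ x) (hxy : x < y) :
    ∃ s, x < s ∧ s < y ∧ ContinuousWithinAt F (Ici 0) s := by
  have hmono : Monotone (fun r : ℝ => F (max r 0)) := fun p q hpq =>
    hF.1 (le_max_right _ _) (max_le_max_right 0 hpq)
  have hd := hmono.countable_not_continuousAt.dense_compl ℝ
  obtain ⟨s, hs, hs1, hs2⟩ := hd.exists_between hxy
  refine ⟨s, hs1, hs2, ?_⟩
  simp only [mem_compl_iff, mem_ofPred_eq, not_not] at hs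
  refine hs.continuousWithinAt.congr (fun z hz => ?_) ?_
  · rw [max_eq_left (mem_Ici.1 hz)]
  · rw [max_eq_left (hx.trans hs1.le)]

lemma vagueConv_of_close {G H : ℕ → ℝ → ℝ} {F : ℝ → ℝ} (hF : MemF F) (hGH : AsympClose G H)
    (h0 : ∀ k, G k 0 = H k 0) (hG : VagueConv G F) : VagueConv H F := by
  intro t ht hc
  rcases ht.eq_or_lt with rfl | htpos
  · simpa [h0] using hG 0 le_rfl hc
  rw [Metric.tendsto_atTop']
  rw [Metric.continuousWithinAt_iff] at hc
  intro ε hε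
  obtain ⟨δ, hδ, hcδ⟩ := hc (ε / 4) (by linarith)
  obtain ⟨p, hp1, hp2, hpc⟩ := exists_cont_point hF (x := max (t / 2) (t - δ)) (y := t)
    (le_max_of_le_left (by linarith)) (max_lt (by linarith) (by linarith))
  obtain ⟨q, hq1, hq2, hqc⟩ := exists_cont_point hF (x := t) (y := t + δ) ht (by linarith)
  have hp3 := lt_of_le_of_lt (le_max_left _ _) hp1
  have hp4 := lt_of_le_of_lt (le_max_right _ _) hp1
  have hp0 : 0 < p := by linarith
  have hFp := hcδ (mem_Ici.2 hp0.le) (by rw [Real.dist_eq, abs_lt]; constructor <;> linarith)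
  have hFq := hcδ (mem_Ici.2 (by linarith : (0:ℝ) ≤ q))
    (by rw [Real.dist_eq, abs_lt]; constructor <;> linarith)
  rw [Real.dist_eq, abs_lt] at hFp hFq
  have hGp := Metric.tendsto_nhds.1 (hG p hp0.le hpc) (ε / 4) (by linarith)
  have hGq := Metric.tendsto_nhds.1 (hG q (by linarith) hqc) (ε / 4) (by linarith)
  have hev : ∀ᶠ k in atTop, dist (H k t) (F t) < ε := by
    filter_upwards [hGp, hGq, hGH p t hp0 hp2 (ε / 4) (by linarith),
      hGH t q htpos hq1 (ε / 4) (by linarith)] with k h1 h2 h3 h4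
    rw [Real.dist_eq, abs_lt] at *
    constructor <;> linarith [h3.1, h4.2, h1.1, h2.2]
  obtain ⟨N, hN⟩ := eventually_atTop.1 hev
  exact ⟨N, fun n hn => hN n hn.le⟩

/-! ### First entrance times -/

section times

variable {X : Type*} {T : X → X}

lemma phiRT_le {E : Set X} {x : X} {n : ℕ} (hn : 0 < n) (h : T^[n] x ∈ E) :
    phiRT T E x ≤ n :=
  iInf₂_le (f := fun (n : ℕ) (_ : n ∈ {n : ℕ | 0 < n ∧ T^[n] x ∈ E}) => (n : ℝ≥0∞)) n ⟨hn, h⟩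

lemma phiRT_anti {E U : Set X} (h : E ⊆ U) (x : X) : phiRT T U x ≤ phiRT T E x :=
  le_iInf₂ fun _ hn => phiRT_le hn.1 (h hn.2)

lemma one_le_phiRT (E : Set X) (x : X) : 1 ≤ phiRT T E x :=
  le_iInf₂ fun _ hn => by exact_mod_cast hn.1

lemma phiRT_attained {E : Set X} {x : X} (h : phiRT T E x ≠ ∞) :
    ∃ n : ℕ, 0 < n ∧ T^[n] x ∈ E ∧ phiRT T E x = n ∧ ∀ m, 0 < m → m < n → T^[m] x ∉ E := by
  classical
  have hex : ∃ n : ℕ, 0 < n ∧ T^[n] x ∈ E := by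
    by_contra hcon
    apply h
    simp only [phiRT, iInf_eq_top]
    intro n hn
    exact absurd ⟨n, hn⟩ hcon
  refine ⟨Nat.find hex, (Nat.find_spec hex).1, (Nat.find_spec hex).2, ?_, ?_⟩
  · refine le_antisymm (phiRT_le (Nat.find_spec hex).1 (Nat.find_spec hex).2) ?_
    refine le_iInf₂ fun m hm => ?_
    exact_mod_cast Nat.find_min' hex hm
  · intro m hm hlt hmem
    exact Nat.find_min hex hlt ⟨hm, hmem⟩

lemma scale_le {g g' t s : ℝ} {p : ℝ≥0∞} (hg : 0 < g) (hg' : 0 < g') (h : g' * t ≤ g * s)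
    (hp : ENNReal.ofReal g * p ≤ ENNReal.ofReal t) :
    ENNReal.ofReal g' * p ≤ ENNReal.ofReal s := by
  have hg0 : ENNReal.ofReal g ≠ 0 := by simpa using hg
  rw [← ENNReal.mul_le_mul_iff_right hg0 ENNReal.ofReal_ne_top, ← ENNReal.ofReal_mul hg.le]
  calc ENNReal.ofReal g * (ENNReal.ofReal g' * p)
      = ENNReal.ofReal g' * (ENNReal.ofReal g * p) := by ring
    _ ≤ ENNReal.ofReal g' * ENNReal.ofReal t := by gcongr
    _ = ENNReal.ofReal (g' * t) := (ENNReal.ofReal_mul hg'.le).symm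
    _ ≤ _ := ENNReal.ofReal_le_ofReal h

/-- `firstVisit T U D n` is the set of points which are in `D` at time `n + 1` and outside `U` at the
times `1, …, n`. The set `U` is removed before taking the preimage, so that the measures of
`firstVisit T U D n ∩ U` telescope. -/
def firstVisit (T : X → X) (U D : Set X) : ℕ → Set X
  | 0 => T ⁻¹' D
  | n + 1 => T ⁻¹' (firstVisit T U D n \ U)

lemma mem_firstVisit {U D : Set X} (n : ℕ) : ∀ x : X, T^[n + 1] x ∈ D →
    (∀ m, 0 < m → m < n + 1 → T^[m] x ∉ U) → x ∈ firstVisit T U D n := by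
  induction n with
  | zero => intro x hx _; exact hx
  | succ n ih =>
    intro x hx hm
    refine ⟨ih (T x) (by simpa using hx) fun m h0 h1 => ?_, ?_⟩
    · simpa using hm (m + 1) (by omega) (by omega)
    · simpa using hm 1 (by omega) (by omega)

/-- If the scaled entrance time to `U` is at most `t`, then either the scaled entrance time to `E ⊆ U`
is at most `s`, or the first visit to `U` occurs in `U \ E`. -/
lemma entrance_dichotomy {E U : Set X} {g g' t s : ℝ} (hg : 0 < g) (hg' : 0 < g')
    (h : g' * t ≤ g * s) (ht : 0 ≤ t) {x : X}
    (hx : ENNReal.ofReal g * phiRT T U x ≤ ENNReal.ofReal t) :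
    ENNReal.ofReal g' * phiRT T E x ≤ ENNReal.ofReal s ∨
      ∃ n : ℕ, (n + 1 : ℝ) ≤ t / g ∧ T^[n + 1] x ∈ U \ E ∧ x ∈ firstVisit T U (U \ E) n := by
  have hg0 : ENNReal.ofReal g ≠ 0 := by simpa using hg
  have hne : phiRT T U x ≠ ∞ := by
    intro htop
    rw [htop, ENNReal.mul_top hg0] at hx
    exact ENNReal.ofReal_ne_top (top_le_iff.1 hx)
  obtain ⟨n, hn, hnU, hphi, hmin⟩ := phiRT_attained hne
  obtain ⟨n, rfl⟩ := Nat.exists_eq_succ_of_ne_zero hn.ne'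
  by_cases hnE : T^[n + 1] x ∈ E
  · left
    refine scale_le hg hg' h (le_trans ?_ hx)
    rw [hphi]
    gcongr
    exact phiRT_le hn hnE
  · right
    refine ⟨n, ?_, ⟨hnU, hnE⟩, mem_firstVisit n x ⟨hnU, hnE⟩ hmin⟩
    rw [hphi, ← ENNReal.ofReal_natCast, ← ENNReal.ofReal_mul hg.le,
      ENNReal.ofReal_le_ofReal_iff ht] at hx
    rw [le_div_iff₀ hg]
    push_cast at hx
    linarith

end times

/-! ### The two measure estimates -/

section estimates

variable {X : Type*} [MeasurableSpace X] {μ : Measure X} {T : X → X}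

lemma measurableSet_firstVisit (hT : Measurable T) {U D : Set X} (hU : MeasurableSet U)
    (hD : MeasurableSet D) (n : ℕ) : MeasurableSet (firstVisit T U D n) := by
  induction n with
  | zero => exact hT hD
  | succ n ih => exact hT (ih.diff hU)

lemma measure_firstVisit_sum (hT : MeasurePreserving T μ μ) {U D : Set X} (hU : MeasurableSet U)
    (hD : MeasurableSet D) (n : ℕ) :
    ∑ j ∈ Finset.range n, μ (firstVisit T U D j ∩ U) + μ (firstVisit T U D n) = μ D := by
  induction n with
  | zero => simpa [firstVisit] using hT.measure_preimage hD.nullMeasurableSet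
  | succ n ih =>
    have hm := measurableSet_firstVisit hT.measurable hU hD n
    have h1 : μ (firstVisit T U D (n + 1)) = μ (firstVisit T U D n \ U) :=
      hT.measure_preimage (hm.diff hU).nullMeasurableSet
    rw [Finset.sum_range_succ, h1, add_assoc, measure_inter_add_sdiff _ hU, ih]

/-- The points of `U` whose first return to `U` takes place in `D` have measure at most `μ D`. -/
lemma measure_return_le (hT : MeasurePreserving T μ μ) {U D : Set X} (hU : MeasurableSet U)
    (hD : MeasurableSet D) : μ (⋃ n, firstVisit T U D n ∩ U) ≤ μ D := by
  refine (measure_iUnion_le _).trans ?_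
  rw [ENNReal.tsum_eq_iSup_nat]
  refine iSup_le fun n => ?_
  rw [← measure_firstVisit_sum hT hU hD n]
  exact le_self_add

/-- The Darling–Kac property bounds the measure of the points of `Y` that visit `D ⊆ Y` early. -/
lemma dk_bound [SigmaFinite μ] (hT : MeasurePreserving T μ μ) {a : ℝ → ℝ}
    (ha : IsScalingFunction a) {Y : Set X} (hDK : IsDKSet T μ Y a) :
    ∃ N : ℕ, ∀ n ≥ N, ∀ D ⊆ Y, MeasurableSet D →
      μ (⋃ j ∈ Finset.range n, Y ∩ T^[j] ⁻¹' D) ≤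
        ENNReal.ofReal (2 * (μ Y).toReal * a n) * μ D := by
  obtain ⟨hYm, hY0, hYfin, hdk⟩ := hDK
  obtain ⟨N, hN⟩ := hdk 1 one_pos
  refine ⟨max N 1, fun n hn D hDY hD => ?_⟩
  have hn1 : (0 : ℝ) < n := by exact_mod_cast (le_of_max_le_right hn)
  have han : 0 < a n := by
    have := ha.2.1 (mem_Ici.2 le_rfl) (mem_Ici.2 hn1.le) hn1
    rwa [ha.1] at this
  have hYr : 0 < (μ Y).toReal := ENNReal.toReal_pos hY0.ne' hYfin.ne
  have : IsFiniteMeasure (μ.restrict Y) := ⟨by simpa using hYfin⟩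
  have hmeas : ∀ j, μ (Y ∩ T^[j] ⁻¹' D) = ∫⁻ x in D, dkDens T μ Y j x ∂μ := by
    intro j
    have hTj := hT.iterate j
    have hac : Measure.map (T^[j]) (μ.restrict Y) ≪ μ := by
      have h := (Measure.absolutelyContinuous_of_le
        (Measure.restrict_le_self (μ := μ) (s := Y))).map hTj.measurable
      rwa [hTj.map_eq] at h
    have h1 : Measure.map (T^[j]) (μ.restrict Y) D = μ (Y ∩ T^[j] ⁻¹' D) := by
      rw [Measure.map_apply hTj.measurable hD, Measure.restrict_apply (hTj.measurable hD),
        inter_comm]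
    rw [← h1]
    conv_lhs => rw [← Measure.withDensity_rnDeriv_eq _ _ hac]
    rw [withDensity_apply _ hD]
    rfl
  have hfin : ∀ᵐ x ∂μ.restrict D, ∀ j, dkDens T μ Y j x < ∞ := by
    rw [ae_all_iff]
    intro j
    exact ae_restrict_of_ae (Measure.rnDeriv_lt_top _ _)
  have hbd : ∀ᵐ x ∂μ.restrict D, ∑ j ∈ Finset.range n, dkDens T μ Y j x ≤
      ENNReal.ofReal (2 * (μ Y).toReal * a n) := by
    filter_upwards [hfin, ae_restrict_of_ae_restrict_of_subset hDY (hN n (le_of_max_le_left hn))]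
      with x hx1 hx2
    have h3 : ∑ j ∈ Finset.range n, dkDens T μ Y j x =
        ENNReal.ofReal (∑ j ∈ Finset.range n, (dkDens T μ Y j x).toReal) := by
      rw [ENNReal.ofReal_sum_of_nonneg fun _ _ => ENNReal.toReal_nonneg]
      exact Finset.sum_congr rfl fun j _ => (ENNReal.ofReal_toReal (hx1 j).ne).symm
    rw [h3]
    apply ENNReal.ofReal_le_ofReal
    have h4 := (abs_le.1 hx2).2
    rw [sub_le_iff_le_add, div_div, div_le_iff₀ (by positivity)] at h4
    linarith
  calc μ (⋃ j ∈ Finset.range n, Y ∩ T^[j] ⁻¹' D)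
      ≤ ∑ j ∈ Finset.range n, μ (Y ∩ T^[j] ⁻¹' D) := measure_biUnion_finset_le _ _
    _ = ∑ j ∈ Finset.range n, ∫⁻ x in D, dkDens T μ Y j x ∂μ :=
        Finset.sum_congr rfl fun j _ => hmeas j
    _ = ∫⁻ x in D, ∑ j ∈ Finset.range n, dkDens T μ Y j x ∂μ :=
        (lintegral_finsetSum _ fun j _ => Measure.measurable_rnDeriv _ _).symm
    _ ≤ ∫⁻ _ in D, ENNReal.ofReal (2 * (μ Y).toReal * a n) ∂μ := lintegral_mono_ae hbd
    _ = _ := by simp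

end estimates

/-! ### The inverse of a regularly varying scaling function -/

section inverse

variable {a b : ℝ → ℝ}

lemma b_pos (ha : IsScalingFunction a) (hb : ∀ x : ℝ, 0 ≤ x → b (a x) = x)
    {y : ℝ} (hy : 0 < y) : 0 < b y := by
  obtain ⟨x, hx, rfl⟩ := ha.2.2.2.2 y hy.le
  rw [hb x hx]
  refine hx.lt_of_ne ?_
  rintro rfl
  exact hy.ne' ha.1

lemma b_le_of_le (ha : IsScalingFunction a) (hb' : ∀ y : ℝ, 0 ≤ y → a (b y) = y)
    (hb : ∀ x : ℝ, 0 ≤ x → b (a x) = x) {y z : ℝ} (hy : 0 < y) (hz : 0 ≤ z) (h : y ≤ a z) :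
    b y ≤ z := by
  rw [← hb' y hy.le] at h
  exact (ha.2.1.le_iff_le (mem_Ici.2 (b_pos ha hb hy).le) (mem_Ici.2 hz)).1 h

lemma b_tendsto (ha : IsScalingFunction a) (hb' : ∀ y : ℝ, 0 ≤ y → a (b y) = y)
    (hb : ∀ x : ℝ, 0 ≤ x → b (a x) = x) : Tendsto b atTop atTop := by
  rw [tendsto_atTop]
  intro M
  filter_upwards [eventually_gt_atTop (max (a (max M 0)) 0)] with y hy
  have hy0 : 0 < y := lt_of_le_of_lt (le_max_right _ _) hy
  by_contra! hlt
  have h1 : a (b y) ≤ a (max M 0) := ha.2.1.monotoneOn (mem_Ici.2 (b_pos ha hb hy0).le)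
    (mem_Ici.2 (le_max_right _ _)) (hlt.le.trans (le_max_left _ _))
  rw [hb' y hy0.le] at h1
  exact absurd (lt_of_le_of_lt (le_max_left _ _) hy) (not_lt.2 h1)

lemma a_b_tendsto (ha : IsScalingFunction a) (hb' : ∀ y : ℝ, 0 ≤ y → a (b y) = y)
    (hb : ∀ x : ℝ, 0 ≤ x → b (a x) = x) {α : ℝ} (hreg : RegVary a α) {u : ℕ → ℝ}
    (hu : ∀ k, 0 < u k) (hu0 : Tendsto u atTop (𝓝 0)) {c : ℝ} (hc : 0 < c) :
    Tendsto (fun k => a (c * b (1 / u k)) * u k) atTop (𝓝 (c ^ α)) := by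
  have h1 : Tendsto (fun k => 1 / u k) atTop atTop := by
    simp only [one_div]
    exact tendsto_inv_nhdsGT_zero.comp
      (tendsto_nhdsWithin_iff.2 ⟨hu0, Eventually.of_forall hu⟩)
  have h2 := (hreg c hc).comp ((b_tendsto ha hb' hb).comp h1)
  refine h2.congr fun k => ?_
  simp only [Function.comp]
  rw [hb' _ (one_div_nonneg.2 (hu k).le)]
  field_simp

/-- If `u → 0` and `m / u → 1` then `b (1/m)` is eventually at most `c b (1/u)`, for each `c > 1`. -/
lemma ratio_eventually (ha : IsScalingFunction a) (hb' : ∀ y : ℝ, 0 ≤ y → a (b y) = y)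
    (hb : ∀ x : ℝ, 0 ≤ x → b (a x) = x) {α : ℝ} (hα : 0 < α) (hreg : RegVary a α) {u m : ℕ → ℝ}
    (hu : ∀ k, 0 < u k) (hm : ∀ k, 0 < m k) (hu0 : Tendsto u atTop (𝓝 0))
    (hmu : Tendsto (fun k => m k / u k) atTop (𝓝 1)) {c : ℝ} (hc : 1 < c) :
    ∀ᶠ k in atTop, b (1 / m k) ≤ c * b (1 / u k) := by
  have h := (a_b_tendsto ha hb' hb hreg hu hu0 (by linarith : 0 < c)).mul hmu
  rw [mul_one] at h
  filter_upwards [h.eventually_const_lt (Real.one_lt_rpow hc hα)] with k hk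
  have hum := hu k
  have hmm := hm k
  refine b_le_of_le ha hb' hb (one_div_pos.2 hmm)
    (mul_nonneg (by linarith) (b_pos ha hb (one_div_pos.2 hum)).le) ?_
  rw [div_le_iff₀ hmm]
  rw [mul_assoc, mul_div_cancel₀ _ hum.ne'] at hk
  exact hk.le

end inverse

/-! ### Comparison with a slightly larger set -/

section compare

variable {X : Type*} [MeasurableSpace X] {μ : Measure X} {T : X → X}

/-- `condProb` as a quotient of real measures. -/
lemma condProb_eq (A B : Set X) : condProb μ A B = μ.real (A ∩ B) / μ.real A := by
  simp [condProb, Measure.real, ENNReal.toReal_div]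

lemma nrmDF_zero {γT : ℝ → ℝ} {A E : Set X} (h : 0 < γT (μ E).toReal) :
    nrmDF μ T γT A E 0 = 0 := by
  have : {x | ENNReal.ofReal (γT (μ E).toReal) * phiRT T E x ≤ ENNReal.ofReal 0} = ∅ := by
    ext x
    simp only [ENNReal.ofReal_zero, nonpos_iff_eq_zero, mul_eq_zero, ENNReal.ofReal_eq_zero,
      mem_ofPred_eq, mem_empty_iff_false, iff_false, not_or, not_le]
    exact ⟨h, (zero_lt_one.trans_le (one_le_phiRT E x)).ne'⟩
  rw [nrmDF, this]
  simp [condProb]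

/-- Passing from `E k` to a superset `U k ⊆ Y` with `μ (U k \ E k) = o(μ (U k))` changes neither the
normalized return distributions nor the normalized hitting distributions asymptotically. -/
lemma close_of_subset [SigmaFinite μ] (hT : MeasurePreserving T μ μ)
    {a b γT : ℝ → ℝ} (ha : IsScalingFunction a) {Y : Set X} (hDK : IsDKSet T μ Y a)
    {α : ℝ} (hα : 0 < α) (hreg : RegVary a α)
    (hb : ∀ x : ℝ, 0 ≤ x → b (a x) = x) (hb' : ∀ y : ℝ, 0 ≤ y → a (b y) = y)
    (hγ : ∀ s : ℝ, 0 < s → γT s = 1 / b (1 / s)) {E U : ℕ → Set X}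
    (hE : ∀ k, MeasurableSet (E k) ∧ 0 < μ (E k)) (hEU : ∀ k, E k ⊆ U k)
    (hU : ∀ k, U k ⊆ Y ∧ MeasurableSet (U k))
    (hU0 : Tendsto (fun k => μ.real (U k)) atTop (𝓝 0))
    (hD : Tendsto (fun k => μ.real (U k \ E k) / μ.real (U k)) atTop (𝓝 0)) :
    AsympClose (fun k => nrmDF μ T γT (E k) (E k)) (fun k => nrmDF μ T γT (U k) (U k)) ∧
    AsympClose (fun k => nrmDF μ T γT Y (E k)) (fun k => nrmDF μ T γT Y (U k)) := by
  have hYm := hDK.1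
  have hYfin := hDK.2.2.1
  have hYr : 0 < μ.real Y := ENNReal.toReal_pos hDK.2.1.ne' hYfin.ne
  have hfin : ∀ {A : Set X}, A ⊆ Y → μ A ≠ ∞ := fun hA =>
    ((measure_mono hA).trans_lt hYfin).ne
  have hUfin := fun k => hfin (hU k).1
  have hEfin := fun k => hfin ((hEU k).trans (hU k).1)
  have hm : ∀ k, 0 < μ.real (E k) := fun k => ENNReal.toReal_pos (hE k).2.ne' (hEfin k)
  have hmu : ∀ k, μ.real (E k) ≤ μ.real (U k) := fun k => measureReal_mono (hEU k) (hUfin k)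
  have hu : ∀ k, 0 < μ.real (U k) := fun k => (hm k).trans_le (hmu k)
  have hud : ∀ k, μ.real (U k \ E k) = μ.real (U k) - μ.real (E k) := fun k =>
    measureReal_sdiff (hEU k) (hE k).1 (hUfin k)
  have hratio : Tendsto (fun k => μ.real (E k) / μ.real (U k)) atTop (𝓝 1) := by
    have h := hD.const_sub 1
    rw [sub_zero] at h
    refine h.congr fun k => ?_
    have := (hu k).ne'
    rw [hud]
    field_simp
    ring
  have hratio' : Tendsto (fun k => μ.real (U k) / μ.real (E k)) atTop (𝓝 1) := by
    have h := hratio.inv₀ one_ne_zero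
    simpa using h
  have hbE : ∀ k, 0 < b (1 / μ.real (E k)) := fun k => b_pos ha hb (one_div_pos.2 (hm k))
  have hbU : ∀ k, 0 < b (1 / μ.real (U k)) := fun k => b_pos ha hb (one_div_pos.2 (hu k))
  have hgE : ∀ k, γT (μ (E k)).toReal = 1 / b (1 / μ.real (E k)) := fun k => hγ _ (hm k)
  have hgU : ∀ k, γT (μ (U k)).toReal = 1 / b (1 / μ.real (U k)) := fun k => hγ _ (hu k)
  have hgEp : ∀ k, 0 < γT (μ (E k)).toReal := fun k => by
    rw [hgE]; exact one_div_pos.2 (hbE k)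
  have hgUp : ∀ k, 0 < γT (μ (U k)).toReal := fun k => by
    rw [hgU]; exact one_div_pos.2 (hbU k)
  -- The rate of `U` is the larger one, so this direction needs no asymptotics.
  have hscale2 : ∀ {t s : ℝ}, 0 < t → t < s → ∀ k,
      γT (μ (E k)).toReal * t ≤ γT (μ (U k)).toReal * s := by
    intro t s ht hts k
    have hle : b (1 / μ.real (U k)) ≤ b (1 / μ.real (E k)) := by
      refine b_le_of_le ha hb' hb (one_div_pos.2 (hu k)) (hbE k).le ?_
      rw [hb' _ (one_div_pos.2 (hm k)).le]
      exact one_div_le_one_div_of_le (hm k) (hmu k)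
    have h1 : γT (μ (E k)).toReal ≤ γT (μ (U k)).toReal := by
      rw [hgE, hgU]
      exact one_div_le_one_div_of_le (hbU k) hle
    exact mul_le_mul h1 hts.le ht.le (hgUp k).le
  have hscale1 : ∀ {t s : ℝ}, 0 < t → t < s → ∀ᶠ k in atTop,
      γT (μ (U k)).toReal * t ≤ γT (μ (E k)).toReal * s := by
    intro t s ht hts
    filter_upwards [ratio_eventually ha hb' hb hα hreg hu hm hU0 hratio
      ((one_lt_div ht).2 hts)] with k hk
    have h1 := hbE k
    have h2 := hbU k
    rw [hgE, hgU, one_div_mul_eq_div, one_div_mul_eq_div, div_le_div_iff₀ h2 h1]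
    rw [div_mul_eq_mul_div, le_div_iff₀ ht] at hk
    linarith
  constructor
  · intro t s ht hts ε hε
    have hD2 : Tendsto (fun k => 2 * (μ.real (U k \ E k) / μ.real (U k))) atTop (𝓝 0) := by
      simpa using hD.const_mul 2
    filter_upwards [hscale1 ht hts, hratio'.eventually_le_const (by linarith : (1:ℝ) < 1 + ε),
      hD2.eventually_le_const hε] with k hk1 hk2 hk3
    simp only [nrmDF, condProb_eq]
    constructor
    · set B := {x | ENNReal.ofReal (γT (μ (U k)).toReal) * phiRT T (U k) x ≤ ENNReal.ofReal s}
      have hsub : μ.real (E k ∩ {x | ENNReal.ofReal (γT (μ (E k)).toReal) * phiRT T (E k) x ≤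
          ENNReal.ofReal t}) ≤ μ.real (U k ∩ B) := by
        refine measureReal_mono (fun x hx => ⟨hEU k hx.1, ?_⟩)
          (measure_ne_top_of_subset inter_subset_left (hUfin k))
        refine le_trans ?_ (scale_le (hgEp k) (hgUp k) hk1 hx.2)
        gcongr
        exact phiRT_anti (hEU k) x
      have hB : μ.real (U k ∩ B) ≤ μ.real (U k) := measureReal_mono inter_subset_left (hUfin k)
      have hB0 : 0 ≤ μ.real (U k ∩ B) := measureReal_nonneg
      have hp : μ.real (U k ∩ B) / μ.real (U k) ≤ 1 := (div_le_one (hu k)).2 hB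
      have hp0 : 0 ≤ μ.real (U k ∩ B) / μ.real (U k) := by positivity
      calc _ ≤ μ.real (U k ∩ B) / μ.real (E k) := by
            have := (hm k).le
            gcongr
        _ = μ.real (U k ∩ B) / μ.real (U k) * (μ.real (U k) / μ.real (E k)) := by
            have := (hm k).ne'
            have := (hu k).ne'
            field_simp
        _ ≤ μ.real (U k ∩ B) / μ.real (U k) * (1 + ε) := by gcongr
        _ ≤ _ := by nlinarith
    · set B := {x | ENNReal.ofReal (γT (μ (E k)).toReal) * phiRT T (E k) x ≤ ENNReal.ofReal s}
      have hUD : MeasurableSet (U k \ E k) := (hU k).2.diff (hE k).1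
      have hret := measure_return_le hT (hU k).2 hUD
      have hDfin : μ (U k \ E k) ≠ ∞ := measure_ne_top_of_subset sdiff_subset (hUfin k)
      have hsub : μ.real (U k ∩ {x | ENNReal.ofReal (γT (μ (U k)).toReal) * phiRT T (U k) x ≤
          ENNReal.ofReal t}) ≤ μ.real (E k ∩ B) + 2 * μ.real (U k \ E k) := by
        have h1 : U k ∩ {x | ENNReal.ofReal (γT (μ (U k)).toReal) * phiRT T (U k) x ≤
            ENNReal.ofReal t} ⊆ (E k ∩ B) ∪ ((U k \ E k) ∪
              ⋃ n, firstVisit T (U k) (U k \ E k) n ∩ U k) := by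
          rintro x ⟨hxU, hx⟩
          by_cases hxE : x ∈ E k
          · rcases entrance_dichotomy (E := E k) (hgUp k) (hgEp k) (hscale2 ht hts k) ht.le hx
              with h | ⟨n, -, -, hn⟩
            · exact Or.inl ⟨hxE, h⟩
            · exact Or.inr (Or.inr (mem_iUnion.2 ⟨n, hn, hxU⟩))
          · exact Or.inr (Or.inl ⟨hxU, hxE⟩)
        have hret' : μ.real (⋃ n, firstVisit T (U k) (U k \ E k) n ∩ U k) ≤
            μ.real (U k \ E k) := ENNReal.toReal_mono hDfin hret
        have hEB : μ (E k ∩ B) ≠ ∞ := measure_ne_top_of_subset inter_subset_left (hEfin k)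
        have h2 := measureReal_mono (μ := μ) h1 (measure_union_ne_top hEB
          (measure_union_ne_top hDfin (ne_top_of_le_ne_top hDfin hret)))
        have h3 := measureReal_union_le (μ := μ) (E k ∩ B) ((U k \ E k) ∪
              ⋃ n, firstVisit T (U k) (U k \ E k) n ∩ U k)
        have h4 := measureReal_union_le (μ := μ) (U k \ E k)
              (⋃ n, firstVisit T (U k) (U k \ E k) n ∩ U k)
        linarith
      have hB0 : 0 ≤ μ.real (E k ∩ B) := measureReal_nonneg
      have hu' := (hu k).le
      calc _ ≤ (μ.real (E k ∩ B) + 2 * μ.real (U k \ E k)) / μ.real (U k) := by gcongr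
        _ = μ.real (E k ∩ B) / μ.real (U k) + 2 * (μ.real (U k \ E k) / μ.real (U k)) := by ring
        _ ≤ μ.real (E k ∩ B) / μ.real (E k) + ε :=
            add_le_add (div_le_div_of_nonneg_left hB0 (hm k) (hmu k)) hk3
  · intro t s ht hts ε hε
    obtain ⟨N, hN⟩ := dk_bound hT ha hDK
    set C : ℝ := (t + 1) ^ α + 1 with hC
    have hC0 : 0 < C := by positivity
    have hDC : Tendsto (fun k => 2 * C * (μ.real (U k \ E k) / μ.real (U k))) atTop (𝓝 0) := by
      simpa using hD.const_mul (2 * C)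
    have hu1 : Tendsto (fun k => 1 / μ.real (U k)) atTop atTop := by
      simp only [one_div]
      exact tendsto_inv_nhdsGT_zero.comp
        (tendsto_nhdsWithin_iff.2 ⟨hU0, Eventually.of_forall hu⟩)
    have hbtop := (b_tendsto ha hb' hb).comp hu1
    filter_upwards [hscale1 ht hts, hDC.eventually_le_const hε,
      (a_b_tendsto ha hb' hb hreg hu hU0 (by linarith : 0 < t + 1)).eventually_le_const
        (by linarith : (t + 1) ^ α < C),
      hbtop.eventually_ge_atTop 1, hbtop.eventually_ge_atTop (N / t)] with k hk1 hk2 hk3 hk4 hk5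
    simp only [nrmDF, condProb_eq]
    simp only [Function.comp] at hk4 hk5
    constructor
    · have hsub : μ.real (Y ∩ {x | ENNReal.ofReal (γT (μ (E k)).toReal) * phiRT T (E k) x ≤
          ENNReal.ofReal t}) ≤ μ.real (Y ∩ {x | ENNReal.ofReal (γT (μ (U k)).toReal) *
            phiRT T (U k) x ≤ ENNReal.ofReal s}) := by
        refine measureReal_mono (fun x hx => ⟨hx.1, ?_⟩)
          (measure_ne_top_of_subset inter_subset_left hYfin.ne)
        refine le_trans ?_ (scale_le (hgEp k) (hgUp k) hk1 hx.2)
        gcongr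
        exact phiRT_anti (hEU k) x
      have := div_le_div_of_nonneg_right hsub hYr.le
      linarith
    · set B := {x | ENNReal.ofReal (γT (μ (E k)).toReal) * phiRT T (E k) x ≤ ENNReal.ofReal s}
      set β := b (1 / μ.real (U k)) with hβ
      -- Visits to `U \ E` have to be counted up to time `⌊t β⌋`, hence `n` summands.
      set n : ℕ := ⌊t * β⌋₊ + 1 with hn
      have htβ : 0 ≤ t * β := mul_nonneg ht.le (by linarith)
      have hNn : N ≤ n := by
        have h1 : (N : ℝ) ≤ t * β := by
          rw [div_le_iff₀ ht] at hk5; linarith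
        have := Nat.le_floor h1
        omega
      have hnβ : (n : ℝ) ≤ (t + 1) * β := by
        have := Nat.floor_le htβ
        rw [hn]
        push_cast
        linarith
      have hUD : MeasurableSet (U k \ E k) := (hU k).2.diff (hE k).1
      have hDfin : μ (U k \ E k) ≠ ∞ := measure_ne_top_of_subset sdiff_subset (hUfin k)
      have hdk := hN n hNn (U k \ E k) (sdiff_subset.trans (hU k).1) hUD
      have han : a n ≤ C / μ.real (U k) := by
        have h1 : a n ≤ a ((t + 1) * β) :=
          ha.2.1.monotoneOn (mem_Ici.2 (Nat.cast_nonneg n))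
            (mem_Ici.2 ((Nat.cast_nonneg n).trans hnβ)) hnβ
        rw [le_div_iff₀ (hu k)]
        exact (mul_le_mul_of_nonneg_right h1 (hu k).le).trans hk3
      have han0 : 0 ≤ a n := ha.2.2.2.1 _ (Nat.cast_nonneg n)
      have hdk' : μ.real (⋃ j ∈ Finset.range n, Y ∩ T^[j] ⁻¹' (U k \ E k)) ≤
          2 * μ.real Y * a n * μ.real (U k \ E k) := by
        have h := ENNReal.toReal_mono (ENNReal.mul_ne_top ENNReal.ofReal_ne_top hDfin) hdk
        rwa [ENNReal.toReal_mul, ENNReal.toReal_ofReal (by positivity)] at h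
      have hsub : Y ∩ {x | ENNReal.ofReal (γT (μ (U k)).toReal) * phiRT T (U k) x ≤
          ENNReal.ofReal t} ⊆ (Y ∩ B) ∪ ⋃ j ∈ Finset.range n, Y ∩ T^[j] ⁻¹' (U k \ E k) := by
        rintro x ⟨hxY, hx⟩
        rcases entrance_dichotomy (E := E k) (hgUp k) (hgEp k) (hscale2 ht hts k) ht.le hx
          with h | ⟨j, hj, hjD, -⟩
        · exact Or.inl ⟨hxY, h⟩
        · refine Or.inr (mem_iUnion₂.2 ⟨j + 1, ?_, hxY, hjD⟩)
          rw [hgU, ← hβ, div_div_eq_mul_div, div_one] at hj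
          have : j + 1 ≤ ⌊t * β⌋₊ := Nat.le_floor (by exact_mod_cast hj)
          rw [Finset.mem_range]
          omega
      have hYB : μ (Y ∩ B) ≠ ∞ := measure_ne_top_of_subset inter_subset_left hYfin.ne
      have h2 := measureReal_mono (μ := μ) hsub (measure_union_ne_top hYB
        (ne_top_of_le_ne_top (ENNReal.mul_ne_top ENNReal.ofReal_ne_top hDfin) hdk))
      have h3 := measureReal_union_le (μ := μ) (Y ∩ B)
        (⋃ j ∈ Finset.range n, Y ∩ T^[j] ⁻¹' (U k \ E k))
      have h4 : 2 * μ.real Y * a n * μ.real (U k \ E k) ≤ ε * μ.real Y := by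
        have hd0 : 0 ≤ μ.real (U k \ E k) := measureReal_nonneg
        calc 2 * μ.real Y * a n * μ.real (U k \ E k)
            ≤ 2 * μ.real Y * (C / μ.real (U k)) * μ.real (U k \ E k) := by gcongr
          _ = 2 * C * (μ.real (U k \ E k) / μ.real (U k)) * μ.real Y := by ring
          _ ≤ ε * μ.real Y := by gcongr
      rw [div_le_iff₀ hYr, add_mul, div_mul_cancel₀ _ hYr.ne']
      linarith

end compare

/-- Robustness of return- and hitting-time limits: if
`μ(E_k △ E_k′) = o(μ(E_k))` then the two sequences of sets have the same asymptotic
normalized return distributions and the same asymptotic hitting distributions. -/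
theorem stmt13 {X : Type*} [MeasurableSpace X] (μ : Measure X) [SigmaFinite μ]
    (T : X → X) (hT : CEMPT T μ) (hInf : μ Set.univ = ∞)
    (a b γT : ℝ → ℝ) (ha : IsScalingFunction a)
    (Y : Set X) (hDK : IsDKSet T μ Y a)
    (α : ℝ) (hα : α ∈ Set.Ioc (0 : ℝ) 1) (hreg : RegVary a α)
    (hb : ∀ x : ℝ, 0 ≤ x → b (a x) = x) (hb' : ∀ y : ℝ, 0 ≤ y → a (b y) = y)
    (hγ : ∀ s : ℝ, 0 < s → γT s = 1 / b (1 / s))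
    (E E' : ℕ → Set X)
    (hE : ∀ k, E k ⊆ Y ∧ MeasurableSet (E k) ∧ 0 < μ (E k))
    (hE' : ∀ k, E' k ⊆ Y ∧ MeasurableSet (E' k) ∧ 0 < μ (E' k))
    (hE0 : Tendsto (fun k => μ (E k)) atTop (𝓝 0))
    (hsym : Tendsto
      (fun k => (μ (symmDiff (E k) (E' k))).toReal / (μ (E k)).toReal) atTop (𝓝 0))
    (F Ftil : ℝ → ℝ) (hF : MemF F) (hFtil : MemF Ftil) :
    (VagueConv (fun k => nrmDF μ T γT (E k) (E k)) Ftil ↔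
      VagueConv (fun k => nrmDF μ T γT (E' k) (E' k)) Ftil) ∧
    (VagueConv (fun k => nrmDF μ T γT Y (E k)) F ↔
      VagueConv (fun k => nrmDF μ T γT Y (E' k)) F) := by
  have hYfin := hDK.2.2.1
  have hfin : ∀ {A : Set X}, A ⊆ Y → μ A ≠ ∞ := fun hA =>
    ((measure_mono hA).trans_lt hYfin).ne
  have hUY : ∀ k, E k ∪ E' k ⊆ Y := fun k => union_subset (hE k).1 (hE' k).1
  have hUm : ∀ k, MeasurableSet (E k ∪ E' k) := fun k => (hE k).2.1.union (hE' k).2.1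
  have hSY : ∀ k, symmDiff (E k) (E' k) ⊆ Y := fun k => symmDiff_subset_union.trans (hUY k)
  have hm : ∀ k, 0 < μ.real (E k) := fun k =>
    ENNReal.toReal_pos (hE k).2.2.ne' (hfin (hE k).1)
  have hm0 : Tendsto (fun k => μ.real (E k)) atTop (𝓝 0) := by
    simpa [Measure.real, Function.comp_def] using (ENNReal.tendsto_toReal zero_ne_top).comp hE0
  have hS0 : Tendsto (fun k => μ.real (symmDiff (E k) (E' k))) atTop (𝓝 0) := by
    have h := hsym.mul hm0
    rw [zero_mul] at h
    exact h.congr fun k => div_mul_cancel₀ _ (hm k).ne'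
  have hsub : ∀ k, E k ∪ E' k ⊆ E k ∪ symmDiff (E k) (E' k) := by
    intro k x hx
    by_cases hxE : x ∈ E k
    · exact Or.inl hxE
    · exact Or.inr (Or.inr ⟨hx.resolve_left hxE, hxE⟩)
  have hU0 : Tendsto (fun k => μ.real (E k ∪ E' k)) atTop (𝓝 0) := by
    refine squeeze_zero (fun _ => measureReal_nonneg) (fun k => ?_) (by simpa using hm0.add hS0)
    exact (measureReal_mono (hsub k) (hfin (union_subset (hE k).1 (hSY k)))).trans
      (measureReal_union_le _ _)
  have hsmall : ∀ D : ℕ → Set X, (∀ k, D k ⊆ symmDiff (E k) (E' k)) →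
      Tendsto (fun k => μ.real (D k) / μ.real (E k ∪ E' k)) atTop (𝓝 0) := by
    intro D hD
    refine squeeze_zero (fun _ => div_nonneg measureReal_nonneg measureReal_nonneg)
      (fun k => ?_) hsym
    exact div_le_div₀ measureReal_nonneg (measureReal_mono (hD k) (hfin (hSY k))) (hm k)
      (measureReal_mono subset_union_left (hfin (hUY k)))
  have hmp := hT.2.toMeasurePreserving
  have h1 := close_of_subset hmp ha hDK hα.1 hreg hb hb' hγ (E := E)
    (U := fun k => E k ∪ E' k) (fun k => (hE k).2) (fun k => subset_union_left)
    (fun k => ⟨hUY k, hUm k⟩) hU0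
    (hsmall _ fun k x hx => Or.inr ⟨hx.1.resolve_left hx.2, hx.2⟩)
  have h2 := close_of_subset hmp ha hDK hα.1 hreg hb hb' hγ (E := E')
    (U := fun k => E k ∪ E' k) (fun k => (hE' k).2) (fun k => subset_union_right)
    (fun k => ⟨hUY k, hUm k⟩) hU0
    (hsmall _ fun k x hx => Or.inl ⟨hx.1.resolve_right hx.2, hx.2⟩)
  have hγpos : ∀ A : Set X, A ⊆ Y → 0 < μ A → 0 < γT (μ A).toReal := by
    intro A hA hA0
    have hr := ENNReal.toReal_pos hA0.ne' (hfin hA)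
    rw [hγ _ hr]
    exact one_div_pos.2 (b_pos ha hb (one_div_pos.2 hr))
  have hz : ∀ (k : ℕ) (A : Set X), nrmDF μ T γT A (E k) 0 = 0 := fun k A =>
    nrmDF_zero (hγpos _ (hE k).1 (hE k).2.2)
  have hz' : ∀ (k : ℕ) (A : Set X), nrmDF μ T γT A (E' k) 0 = 0 := fun k A =>
    nrmDF_zero (hγpos _ (hE' k).1 (hE' k).2.2)
  have hret := h1.1.trans h2.1.symm
  have hhit := h1.2.trans h2.2.symm
  exact ⟨⟨vagueConv_of_close hFtil hret fun k => by rw [hz, hz'],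
      vagueConv_of_close hFtil hret.symm fun k => by rw [hz, hz']⟩,
    ⟨vagueConv_of_close hF hhit fun k => by rw [hz, hz'],
      vagueConv_of_close hF hhit.symm fun k => by rw [hz, hz']⟩⟩
end
end

section
/- Let T be a c.e.m.p.t. on a σ-finite measure space (X,𝒜,μ), Y∈𝒜 with 0<μ(Y)<∞, and let γ:[0,∞)→[0,∞) be a scaling function. For A∈𝒜 with μ(A)>0 set F_A(t):=μ_Y(γ(μ(A))·φ_A ≤ t) for t≥0. Then for all A,B∈𝒜 with μ(A)>0 and μ(B)>0 and all t≥0: F_A( (γ(μ(A))/γ(μ(A∪B)))·t ) ≤ F_{A∪B}(t) ≤ F_A(t) + F_B( (γ(μ(B))/γ(μ(A)))·t ). -/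
/-!
The argument is pointwise. The orbit enters `A ∪ B` exactly when it first enters `A` or `B`, so
`φ_{A ∪ B} = min φ_A φ_B` (`phiRT_union`), and dividing by the positive constant `γ(μ E)` turns
every event `γ(μ E) φ_E ≤ (γ(μ E) / c) t` into `c φ_E ≤ t` (`ofReal_mul_le_div_mul_iff`).
The left inequality is then the inclusion `{c φ_A ≤ t} ⊆ {c φ_{A ∪ B} ≤ t}` with
`c = γ(μ(A ∪ B))`. For the right one, `γ(μ A) ≤ γ(μ(A ∪ B))` gives
`{γ(μ(A ∪ B)) φ_{A ∪ B} ≤ t} ⊆ {γ(μ A) φ_A ≤ t} ∪ {γ(μ A) φ_B ≤ t}`, and the measure is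
subadditive.
-/

open MeasureTheory Filter Set Topology ENNReal

noncomputable section

theorem phiRT_union {X : Type*} (T : X → X) (A B : Set X) (x : X) :
    phiRT T (A ∪ B) x = min (phiRT T A x) (phiRT T B x) := by
  have h : {n : ℕ | 0 < n ∧ T^[n] x ∈ A ∪ B} =
      {n : ℕ | 0 < n ∧ T^[n] x ∈ A} ∪ {n : ℕ | 0 < n ∧ T^[n] x ∈ B} := by
    ext n
    simp only [mem_ofPred_eq, mem_union]
    tauto
  unfold phiRT
  rw [h, iInf_union]

/-- Change of normalization from `a` to `c`; valid also for an infinite time `p`. -/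
theorem ofReal_mul_le_div_mul_iff {a c : ℝ} (ha : 0 < a) (hc : 0 < c) (t : ℝ) (p : ℝ≥0∞) :
    ENNReal.ofReal a * p ≤ ENNReal.ofReal (a / c * t) ↔
      ENNReal.ofReal c * p ≤ ENNReal.ofReal t := by
  have hc0 : ENNReal.ofReal c ≠ 0 := by simpa using hc
  have ha0 : ENNReal.ofReal a ≠ 0 := by simpa using ha
  have e : ENNReal.ofReal (a / c * t) =
      ENNReal.ofReal a * (ENNReal.ofReal t / ENNReal.ofReal c) := by
    rw [← ENNReal.ofReal_div_of_pos hc, ← ENNReal.ofReal_mul ha.le]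
    congr 1
    ring
  rw [e, ENNReal.mul_le_mul_iff_right ha0 ENNReal.ofReal_ne_top,
    ENNReal.le_div_iff_mul_le (Or.inl hc0) (Or.inl ENNReal.ofReal_ne_top), mul_comm]

theorem condProb_mono {X : Type*} [MeasurableSpace X] {μ : Measure X} {Y S S' : Set X}
    (hY0 : 0 < μ Y) (hY1 : μ Y < ∞) (h : S ⊆ S') : condProb μ Y S ≤ condProb μ Y S' := by
  refine ENNReal.toReal_mono ?_ (by gcongr)
  exact (ENNReal.div_lt_top ((measure_mono inter_subset_left).trans_lt hY1).ne hY0.ne').ne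

theorem condProb_union_le {X : Type*} [MeasurableSpace X] {μ : Measure X} {Y : Set X}
    (S S' : Set X) (hY0 : 0 < μ Y) (hY1 : μ Y < ∞) :
    condProb μ Y (S ∪ S') ≤ condProb μ Y S + condProb μ Y S' := by
  have hfin : ∀ R : Set X, μ (Y ∩ R) / μ Y ≠ ∞ := fun R =>
    (ENNReal.div_lt_top ((measure_mono inter_subset_left).trans_lt hY1).ne hY0.ne').ne
  unfold condProb
  rw [← ENNReal.toReal_add (hfin _) (hfin _)]
  refine ENNReal.toReal_mono (ENNReal.add_ne_top.2 ⟨hfin _, hfin _⟩) ?_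
  rw [← ENNReal.add_div, inter_union_distrib_left]
  gcongr
  exact measure_union_le _ _

/-- For `F_A(t) := μ_Y(γ(μ(A))·φ_A ≤ t)` one has the sandwich
`F_A((γ(μA)/γ(μ(A∪B)))·t) ≤ F_{A∪B}(t) ≤ F_A(t) + F_B((γ(μB)/γ(μA))·t)`. -/
theorem stmt14 {X : Type*} [MeasurableSpace X] (μ : Measure X) [SigmaFinite μ]
    (T : X → X) (hT : CEMPT T μ)
    (Y : Set X) (hY : MeasurableSet Y) (hY0 : 0 < μ Y) (hY1 : μ Y < ∞)
    (γ : ℝ → ℝ) (hγ : IsScalingFunction γ)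
    (A B : Set X) (hA : MeasurableSet A) (hB : MeasurableSet B)
    (hA0 : 0 < μ A) (hB0 : 0 < μ B) (hAfin : μ A < ∞) (hBfin : μ B < ∞)
    (t : ℝ) (ht : 0 ≤ t) :
    nrmDF μ T γ Y A (γ (μ A).toReal / γ (μ (A ∪ B)).toReal * t) ≤
        nrmDF μ T γ Y (A ∪ B) t ∧
      nrmDF μ T γ Y (A ∪ B) t ≤
        nrmDF μ T γ Y A t + nrmDF μ T γ Y B (γ (μ B).toReal / γ (μ A).toReal * t) := by
  obtain ⟨hγ0, hγm, -, -, -⟩ := hγ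
  have hpos : ∀ E : Set X, 0 < μ E → μ E < ∞ → 0 < γ (μ E).toReal := fun E h0 h1 => by
    have h := hγm (mem_Ici.2 le_rfl) (mem_Ici.2 ENNReal.toReal_nonneg)
      (ENNReal.toReal_pos h0.ne' h1.ne)
    rwa [hγ0] at h
  have hUfin : μ (A ∪ B) < ∞ := measure_union_lt_top hAfin hBfin
  have gA := hpos A hA0 hAfin
  have gB := hpos B hB0 hBfin
  have gU := hpos (A ∪ B) (hA0.trans_le (measure_mono subset_union_left)) hUfin
  have gAU : γ (μ A).toReal ≤ γ (μ (A ∪ B)).toReal :=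
    hγm.monotoneOn (mem_Ici.2 ENNReal.toReal_nonneg) (mem_Ici.2 ENNReal.toReal_nonneg)
      (ENNReal.toReal_mono hUfin.ne (measure_mono subset_union_left))
  unfold nrmDF
  simp only [ofReal_mul_le_div_mul_iff gA gU, ofReal_mul_le_div_mul_iff gB gA, phiRT_union]
  constructor
  · refine condProb_mono hY0 hY1 fun x hx => ?_
    rw [mem_ofPred_eq] at hx ⊢
    exact (mul_le_mul_right (min_le_left _ _) _).trans hx
  · refine (condProb_mono hY0 hY1 fun x hx => ?_).trans (condProb_union_le _ _ hY0 hY1)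
    rw [mem_ofPred_eq] at hx
    have hx' := (mul_le_mul_left (ENNReal.ofReal_le_ofReal gAU) _).trans hx
    rcases min_choice (phiRT T A x) (phiRT T B x) with h | h <;> rw [h] at hx'
    · exact Or.inl hx'
    · exact Or.inr hx'
end
end
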